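/- arXiv:1505.06983 — 2 statements merged into one kernel-verified Lean document; each statement's English description precedes it below -/
import Mathlib

section
/- Let m, p ≥ 1 be integers, d = gcd(p, m) and r = p/d. Then Coker s_p(X_m) ≅ ℤ^{d−1} ⊕ ℤ/rℤ if m is even; Coker s_p(X_m) ≅ ℤ^d if m is odd and p is even; and Coker s_p(X_m) ≅ (ℤ/2ℤ)^{d−1} if m is odd and p is odd. -/
open Matrix Polynomial

/-- The `m × m` permutation matrix over `ℤ` of the cyclic permutation `(1,2,…,m)`:
its `(i,j)` entry is `1` iff `i ≡ j + 1 (mod m)`. -/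
def cycMat (m : ℕ) : Matrix (Fin m) (Fin m) ℤ :=
  Matrix.of fun i j => if ((j : ℕ) + 1) % m = (i : ℕ) then 1 else 0

/-- `X_m ^ p` for an integer exponent `p`, well defined since `X_m ^ m = 1`. -/
def cycMatZPow (m : ℕ) (p : ℤ) : Matrix (Fin m) (Fin m) ℤ :=
  cycMat m ^ (p % (m : ℤ)).toNat

/-- The cokernel `ℤ^m / A·ℤ^n` of an integer matrix. -/
abbrev coker {m n : Type} [Fintype m] [Fintype n] (A : Matrix m n ℤ) :=
  (m → ℤ) ⧸ LinearMap.range A.mulVecLin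


/-- `s_p(A) = 1 - A + A² - ⋯ + (-1)^(p-1) A^(p-1)` for a square integer matrix `A`. -/
def sMat {n : Type} [Fintype n] [DecidableEq n] (p : ℕ) (A : Matrix n n ℤ) :
    Matrix n n ℤ :=
  ∑ i ∈ Finset.range p, ((-1 : ℤ) ^ i) • A ^ i

/-- Two surjective images of a module with the same kernel are isomorphic. -/
theorem nonempty_addEquiv_of_ker_iff {M A B : Type*} [AddCommGroup M] [AddCommGroup A]
    [AddCommGroup B] (f : M →ₗ[ℤ] A) (g : M →ₗ[ℤ] B) (hf : Function.Surjective f)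
    (hg : Function.Surjective g) (h : ∀ x, f x = 0 ↔ g x = 0) : Nonempty (A ≃+ B) := by
  have hk : LinearMap.ker f = LinearMap.ker g := by
    ext x
    simpa using h x
  exact ⟨((f.quotKerEquivOfSurjective hf).symm.trans
    ((Submodule.quotEquivOfEq _ _ hk).trans (g.quotKerEquivOfSurjective hg))).toAddEquiv⟩

theorem cycMat_pow_mulVec_single (m : ℕ) (hm : 0 < m) (k : ℕ) :
    (cycMat m ^ k) *ᵥ Pi.single ⟨0, hm⟩ 1 = Pi.single ⟨k % m, Nat.mod_lt _ hm⟩ 1 := by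
  induction k with
  | zero => simp only [pow_zero, Matrix.one_mulVec, Nat.zero_mod]
  | succ k ih =>
    rw [pow_succ', ← Matrix.mulVec_mulVec, ih]
    ext i
    simp only [cycMat, Matrix.mulVec_single_one, Matrix.col_apply, Matrix.of_apply,
      Pi.single_apply, Fin.ext_iff, Nat.mod_add_mod]
    exact if_congr eq_comm rfl rfl

/-- The map `f ↦ f(-X_m) e₀`. -/
noncomputable def evalNegCycMat (m : ℕ) (hm : 0 < m) : ℤ[X] →ₗ[ℤ] (Fin m → ℤ) where
  toFun f := (aeval (-cycMat m) f) *ᵥ Pi.single ⟨0, hm⟩ 1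
  map_add' f g := by rw [map_add, Matrix.add_mulVec]
  map_smul' c f := by rw [map_smul, Matrix.smul_mulVec, RingHom.id_apply]

theorem evalNegCycMat_mul (m : ℕ) (hm : 0 < m) (f g : ℤ[X]) :
    evalNegCycMat m hm (f * g) = (aeval (-cycMat m) f) *ᵥ evalNegCycMat m hm g := by
  simp only [evalNegCycMat, LinearMap.coe_mk, AddHom.coe_mk, map_mul, Matrix.mulVec_mulVec]

theorem evalNegCycMat_X_pow (m : ℕ) (hm : 0 < m) (k : ℕ) :
    evalNegCycMat m hm (X ^ k) =
      (-1 : ℤ) ^ k • Pi.single ⟨k % m, Nat.mod_lt _ hm⟩ (1 : ℤ) := by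
  have h : (-cycMat m) ^ k = (-1 : ℤ) ^ k • cycMat m ^ k := by
    rw [← _root_.smul_pow]
    simp
  simp only [evalNegCycMat, LinearMap.coe_mk, AddHom.coe_mk, map_pow, aeval_X, h,
    Matrix.smul_mulVec, cycMat_pow_mulVec_single]

theorem evalNegCycMat_surjective (m : ℕ) (hm : 0 < m) :
    Function.Surjective (evalNegCycMat m hm) := by
  intro v
  refine ⟨∑ i : Fin m, ((-1 : ℤ) ^ (i : ℕ) * v i) • X ^ (i : ℕ), ?_⟩
  rw [map_sum]
  ext j
  simp only [map_smul, evalNegCycMat_X_pow, smul_smul, Finset.sum_apply, Pi.smul_apply,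
    Pi.single_apply, Nat.mod_eq_of_lt (Fin.is_lt _), Fin.eta, smul_eq_mul]
  rw [Finset.sum_eq_single j (by intro b _ hb; simp [hb.symm]) (by simp)]
  have : (-1 : ℤ) ^ (j : ℕ) * (-1) ^ (j : ℕ) = 1 := by rw [← mul_pow]; simp
  simp only [if_true]
  linear_combination v j * this

theorem evalNegCycMat_apply_of_degree_lt (m : ℕ) (hm : 0 < m) (f : ℤ[X])
    (hf : f.natDegree < m) (j : Fin m) :
    evalNegCycMat m hm f j = (-1) ^ (j : ℕ) * f.coeff j := by
  conv_lhs => rw [f.as_sum_range' m hf]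
  rw [map_sum, Finset.sum_apply, Finset.sum_eq_single (j : ℕ)]
  · rw [← smul_X_eq_monomial, map_smul, evalNegCycMat_X_pow]
    simp [Nat.mod_eq_of_lt j.is_lt, mul_comm]
  · intro b hb hbj
    rw [← smul_X_eq_monomial, map_smul, evalNegCycMat_X_pow]
    have : j ≠ ⟨b % m, Nat.mod_lt _ hm⟩ := by
      intro h
      exact hbj ((Nat.mod_eq_of_lt (Finset.mem_range.1 hb)).symm.trans (Fin.ext_iff.1 h).symm)
    simp [this]
  · simp

theorem evalNegCycMat_eq_zero_iff (m : ℕ) (hm : 0 < m) (f : ℤ[X]) :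
    evalNegCycMat m hm f = 0 ↔ X ^ m - C ((-1 : ℤ) ^ m) ∣ f := by
  have hmon : (X ^ m - C ((-1 : ℤ) ^ m)).Monic := monic_X_pow_sub_C _ hm.ne'
  have hker : evalNegCycMat m hm (X ^ m - C ((-1 : ℤ) ^ m)) = 0 := by
    have h0 := evalNegCycMat_X_pow m hm 0
    have h1 := evalNegCycMat_X_pow m hm m
    rw [← mul_one (C _), ← smul_eq_C_mul, map_sub, map_smul, ← pow_zero X, h0, h1]
    simp
  constructor
  · intro h
    rw [← modByMonic_eq_zero_iff_dvd hmon]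
    have hdeg : (f %ₘ (X ^ m - C ((-1 : ℤ) ^ m))).natDegree < m := by
      have := natDegree_modByMonic_lt f hmon (by
        intro h1
        have := congrArg natDegree h1
        rw [natDegree_X_pow_sub_C, natDegree_one] at this
        omega)
      rwa [natDegree_X_pow_sub_C] at this
    have hr : evalNegCycMat m hm (f %ₘ (X ^ m - C ((-1 : ℤ) ^ m))) = 0 := by
      rw [modByMonic_eq_sub_mul_div, map_sub, h, mul_comm, evalNegCycMat_mul, hker]
      simp
    ext j
    by_cases hj : j < m
    · have := evalNegCycMat_apply_of_degree_lt m hm _ hdeg ⟨j, hj⟩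
      rw [hr] at this
      simpa using this.symm
    · rw [coeff_eq_zero_of_natDegree_lt (by omega), coeff_zero]
  · rintro ⟨g, rfl⟩
    rw [mul_comm, evalNegCycMat_mul, hker, Matrix.mulVec_zero]

theorem sMat_eq_aeval {n : Type} [Fintype n] [DecidableEq n] (p : ℕ) (A : Matrix n n ℤ) :
    sMat p A = aeval (-A) (∑ i ∈ Finset.range p, (X : ℤ[X]) ^ i) := by
  rw [sMat, map_sum]
  refine Finset.sum_congr rfl fun i _ => ?_
  rw [map_pow, aeval_X, ← _root_.smul_pow]
  simp

/-- The cokernel of `s_p(X_m)` is the quotient of `ℤ[X]` by `(X^m - (-1)^m, 1 + X + ⋯ + X^(p-1))`,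
with `X` acting as `-X_m`. -/
theorem exists_surjective_coker (m p : ℕ) (hm : 0 < m) :
    ∃ φ : ℤ[X] →ₗ[ℤ] coker (sMat p (cycMat m)), Function.Surjective φ ∧
      ∀ f, φ f = 0 ↔ f ∈ Ideal.span
        {X ^ m - C ((-1 : ℤ) ^ m), ∑ i ∈ Finset.range p, (X : ℤ[X]) ^ i} := by
  refine ⟨(Submodule.mkQ _).comp (evalNegCycMat m hm),
    (Submodule.mkQ_surjective _).comp (evalNegCycMat_surjective m hm), fun f => ?_⟩
  rw [LinearMap.comp_apply, Submodule.mkQ_apply, Submodule.Quotient.mk_eq_zero,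
    LinearMap.mem_range, Ideal.mem_span_pair]
  constructor
  · rintro ⟨v, hv⟩
    obtain ⟨g, rfl⟩ := evalNegCycMat_surjective m hm v
    rw [Matrix.mulVecLin_apply, sMat_eq_aeval, ← evalNegCycMat_mul, eq_comm, ← sub_eq_zero,
      ← map_sub, evalNegCycMat_eq_zero_iff] at hv
    obtain ⟨q, hq⟩ := hv
    exact ⟨q, g, by linear_combination -hq⟩
  · rintro ⟨a, b, rfl⟩
    refine ⟨evalNegCycMat m hm b, ?_⟩
    rw [Matrix.mulVecLin_apply, sMat_eq_aeval, ← evalNegCycMat_mul, eq_comm, ← sub_eq_zero,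
      ← map_sub, evalNegCycMat_eq_zero_iff]
    exact ⟨a, by ring⟩

section PowerRelations

variable {R : Type*} [CommRing R] {x : R}

theorem geom_sum_mul_of_pow_eq_one {d : ℕ} (h : x ^ d = 1) (r : ℕ) :
    ∑ i ∈ Finset.range (d * r), x ^ i = r * ∑ i ∈ Finset.range d, x ^ i := by
  induction r with
  | zero => simp
  | succ r ih =>
    rw [mul_add_one, Finset.sum_range_add, ih]
    simp only [pow_add, pow_mul, h, one_pow, one_mul]
    push_cast
    ring

theorem pow_eq_one_of_geom_sum_eq_zero {p : ℕ} (h : ∑ i ∈ Finset.range p, x ^ i = 0) :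
    x ^ p = 1 := by
  have := geom_sum_mul x p
  rw [h, zero_mul] at this
  exact (sub_eq_zero.1 this.symm)

theorem relations_iff_of_even {m p d r : ℕ} (hd : d = Nat.gcd p m) (hpr : p = d * r)
    (hm : Even m) :
    (x ^ m = (-1) ^ m ∧ ∑ i ∈ Finset.range p, x ^ i = 0) ↔
      (x ^ d = 1 ∧ r * ∑ i ∈ Finset.range d, x ^ i = 0) := by
  rw [hm.neg_one_pow]
  constructor
  · rintro ⟨h1, h2⟩
    have hxd : x ^ d = 1 := hd ▸ pow_gcd_eq_one.2 ⟨pow_eq_one_of_geom_sum_eq_zero h2, h1⟩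
    exact ⟨hxd, by rw [← geom_sum_mul_of_pow_eq_one hxd, ← hpr, h2]⟩
  · rintro ⟨h1, h2⟩
    obtain ⟨k, hk⟩ : d ∣ m := hd ▸ Nat.gcd_dvd_right p m
    exact ⟨by rw [hk, pow_mul, h1, one_pow],
      by rw [hpr, geom_sum_mul_of_pow_eq_one h1, h2]⟩

theorem relations_iff_of_odd_of_even {m p d r : ℕ} (hd : d = Nat.gcd p m) (hpr : p = d * r)
    (hm : Odd m) (hp : Even p) :
    (x ^ m = (-1) ^ m ∧ ∑ i ∈ Finset.range p, x ^ i = 0) ↔ x ^ d = -1 := by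
  rw [hm.neg_one_pow]
  obtain ⟨k, hk⟩ : d ∣ m := hd ▸ Nat.gcd_dvd_right p m
  have hodd : Odd d ∧ Odd k := Nat.odd_mul.1 (hk ▸ hm)
  obtain ⟨j, hj⟩ := hodd.2
  have hr : Even r := by
    have := Nat.even_mul.1 (hpr ▸ hp)
    exact this.resolve_left (Nat.not_even_iff_odd.2 hodd.1)
  obtain ⟨t, ht⟩ := hr
  constructor
  · rintro ⟨h1, h2⟩
    have hg : Nat.gcd p (2 * m) = 2 * d := by
      obtain ⟨q, hq⟩ := hp.two_dvd
      rw [hd, hq, Nat.gcd_mul_left, Nat.Coprime.gcd_mul_left_cancel]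
      exact hm.coprime_two_left
    have h2d : x ^ (2 * d) = 1 := by
      rw [← hg]
      exact pow_gcd_eq_one.2 ⟨pow_eq_one_of_geom_sum_eq_zero h2,
        by rw [mul_comm, pow_mul, h1]; norm_num⟩
    rw [hk, hj, show d * (2 * j + 1) = 2 * d * j + d by ring, pow_add, pow_mul, h2d,
      one_pow, one_mul] at h1
    exact h1
  · intro h
    have h2d : x ^ (d * 2) = 1 := by rw [pow_mul, h]; norm_num
    refine ⟨by rw [hk, pow_mul, h, (hodd.2).neg_one_pow], ?_⟩
    rw [hpr, ht, show d * (t + t) = d * 2 * t by ring, geom_sum_mul_of_pow_eq_one h2d,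
      mul_two, Finset.sum_range_add]
    simp only [pow_add, h]
    simp

theorem relations_iff_of_odd_of_odd {m p d r : ℕ} (hd : d = Nat.gcd p m) (hpr : p = d * r)
    (hm : Odd m) (hp : Odd p) :
    (x ^ m = (-1) ^ m ∧ ∑ i ∈ Finset.range p, x ^ i = 0) ↔
      ((2 : R) = 0 ∧ ∑ i ∈ Finset.range d, x ^ i = 0) := by
  rw [hm.neg_one_pow]
  obtain ⟨k, hk⟩ : d ∣ m := hd ▸ Nat.gcd_dvd_right p m
  obtain ⟨t, ht⟩ : Odd r := (Nat.odd_mul.1 (hpr ▸ hp)).2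
  constructor
  · rintro ⟨h1, h2⟩
    have hg : Nat.gcd p (2 * m) = d := by
      rw [hd, Nat.Coprime.gcd_mul_left_cancel_right]
      exact hp.coprime_two_left
    have hxd : x ^ d = 1 := by
      rw [← hg]
      exact pow_gcd_eq_one.2 ⟨pow_eq_one_of_geom_sum_eq_zero h2,
        by rw [mul_comm, pow_mul, h1]; norm_num⟩
    have htwo : (2 : R) = 0 := by
      rw [hk, pow_mul, hxd, one_pow] at h1
      linear_combination h1
    refine ⟨htwo, ?_⟩
    rw [hpr, geom_sum_mul_of_pow_eq_one hxd, ht] at h2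
    push_cast at h2
    linear_combination h2 - (t * ∑ i ∈ Finset.range d, x ^ i) * htwo
  · rintro ⟨h1, h2⟩
    have hxd := pow_eq_one_of_geom_sum_eq_zero h2
    refine ⟨?_, by rw [hpr, geom_sum_mul_of_pow_eq_one hxd, h2, mul_zero]⟩
    rw [hk, pow_mul, hxd, one_pow]
    linear_combination h1

end PowerRelations

/-- Two ideals coincide when the same quotients kill their generators. -/
theorem span_eq_span_of_quotient_iff {S : Type*} [CommRing S] {s t : Set S}
    (h : ∀ I : Ideal S, (∀ a ∈ s, Ideal.Quotient.mk I a = 0) ↔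
      ∀ a ∈ t, Ideal.Quotient.mk I a = 0) : Ideal.span s = Ideal.span t := by
  simp only [Ideal.Quotient.eq_zero_iff_mem] at h
  exact le_antisymm (Ideal.span_le.2 ((h _).2 fun a ha => Ideal.subset_span ha))
    (Ideal.span_le.2 ((h _).1 fun a ha => Ideal.subset_span ha))

/-- The first `n` coefficients of the remainder modulo `g`. -/
noncomputable def remCoeff (g : ℤ[X]) (n : ℕ) : ℤ[X] →ₗ[ℤ] (Fin n → ℤ) where
  toFun f i := (f %ₘ g).coeff i
  map_add' f f' := by ext i; simp [add_modByMonic]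
  map_smul' c f := by ext i; simp only [smul_modByMonic, coeff_smul]; rfl

theorem exists_remCoeff_eq {g : ℤ[X]} {n : ℕ} (hg : g.Monic) (hn : g.degree = n)
    (v : Fin n → ℤ) : ∃ f : ℤ[X], remCoeff g n f = v := by
  refine ⟨∑ i : Fin n, C (v i) * X ^ (i : ℕ), ?_⟩
  ext j
  have : (∑ i : Fin n, C (v i) * X ^ (i : ℕ)) %ₘ g = ∑ i : Fin n, C (v i) * X ^ (i : ℕ) := by
    rw [modByMonic_eq_self_iff hg, hn]
    exact degree_sum_fin_lt v
  simp only [remCoeff, LinearMap.coe_mk, AddHom.coe_mk, this, finsetSum_coeff, coeff_C_mul,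
    coeff_X_pow]
  rw [Finset.sum_eq_single j (by
    intro b _ hb
    rw [if_neg (fun h => hb (Fin.ext h).symm), mul_zero]) (by simp)]
  simp

theorem remCoeff_eq_iff {g : ℤ[X]} {n : ℕ} (hg : g.Monic) (hn : g.degree = n) (f f' : ℤ[X]) :
    remCoeff g n f = remCoeff g n f' ↔ g ∣ f - f' := by
  rw [← modByMonic_eq_zero_iff_dvd hg, sub_modByMonic, sub_eq_zero]
  constructor
  · intro h
    ext j
    by_cases hj : j < n
    · exact congrFun h ⟨j, hj⟩
    · have hlt : ∀ q : ℤ[X], (q %ₘ g).coeff j = 0 := fun q =>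
        coeff_eq_zero_of_degree_lt <| (degree_modByMonic_lt q hg).trans_le <| by
          rw [hn]; exact_mod_cast Nat.le_of_not_lt hj
      rw [hlt, hlt]
  · intro h
    simp only [remCoeff, LinearMap.coe_mk, AddHom.coe_mk, h]

theorem remCoeff_eq_zero_iff {g : ℤ[X]} {n : ℕ} (hg : g.Monic) (hn : g.degree = n)
    (f : ℤ[X]) : remCoeff g n f = 0 ↔ g ∣ f := by
  simpa using remCoeff_eq_iff hg hn f 0

theorem degree_geom_sum_succ (e : ℕ) :
    (∑ i ∈ Finset.range (e + 1), (X : ℤ[X]) ^ i).degree = e := by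
  have h : (∑ i ∈ Finset.range (e + 1), (X : ℤ[X]) ^ i) =
      X ^ e + ∑ i ∈ Finset.range e, (X : ℤ[X]) ^ i := by
    rw [Finset.sum_range_succ, add_comm]
  rw [h, degree_add_eq_left_of_degree_lt, degree_X_pow]
  rw [degree_X_pow, degree_lt_iff_coeff_zero]
  intro k hk
  simp only [finsetSum_coeff, coeff_X_pow]
  refine Finset.sum_eq_zero fun i hi => if_neg ?_
  have := Finset.mem_range.1 hi
  omega

/-- `ℤ[X] / (2, 1 + X + ⋯ + X^e) ≅ (ℤ/2)^e`. -/
theorem exists_surjective_two_geom_sum (e : ℕ) :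
    ∃ ψ : ℤ[X] →ₗ[ℤ] (Fin e → ZMod 2), Function.Surjective ψ ∧
      ∀ f, ψ f = 0 ↔ f ∈ Ideal.span {2, ∑ i ∈ Finset.range (e + 1), (X : ℤ[X]) ^ i} := by
  set g := ∑ i ∈ Finset.range (e + 1), (X : ℤ[X]) ^ i with hgdef
  have hg : g.Monic := monic_geom_sum_X e.succ_ne_zero
  have hn : g.degree = e := degree_geom_sum_succ e
  refine ⟨((Int.castAddHom (ZMod 2)).toIntLinearMap.compLeft (Fin e)).comp (remCoeff g e),
    fun v => ?_, fun f => ?_⟩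
  · obtain ⟨f, hf⟩ := exists_remCoeff_eq hg hn fun i => ((v i).cast : ℤ)
    refine ⟨f, ?_⟩
    ext i
    simp [hf]
  · rw [Ideal.mem_span_pair]
    constructor
    · intro h
      have h2 : ∀ i, (2 : ℤ) ∣ remCoeff g e f i := fun i =>
        (ZMod.intCast_zmod_eq_zero_iff_dvd _ 2).1 (by simpa using congrFun h i)
      choose w hw using h2
      obtain ⟨q, hq⟩ := exists_remCoeff_eq hg hn w
      have : remCoeff g e f = remCoeff g e ((2 : ℤ) • q) := by
        rw [map_smul, hq]
        ext i
        simp [hw i]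
      obtain ⟨b, hb⟩ := (remCoeff_eq_iff hg hn _ _).1 this
      refine ⟨q, b, ?_⟩
      rw [zsmul_eq_mul] at hb
      push_cast at hb
      linear_combination -hb
    · rintro ⟨a, b, rfl⟩
      have h0 : remCoeff g e (b * g) = 0 := (remCoeff_eq_zero_iff hg hn _).2 ⟨b, mul_comm _ _⟩
      have h1 : a * 2 = (2 : ℤ) • a := by rw [zsmul_eq_mul, mul_comm]; push_cast; rfl
      rw [LinearMap.comp_apply, map_add, h0, h1, map_smul, add_zero, map_smul]
      ext i
      have : (2 : ZMod 2) = 0 := rfl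
      simp [this]

/-- The isomorphism `ℤ^(e+1) / r(1,…,1) ≅ ℤ^e × ℤ/r`, as a surjection. -/
def diffLast (e r : ℕ) : (Fin (e + 1) → ℤ) →ₗ[ℤ] (Fin e → ℤ) × ZMod r where
  toFun v := (fun i => v i.castSucc - v (Fin.last e), (v (Fin.last e) : ZMod r))
  map_add' v w := by
    ext i
    · simp; ring
    · simp
  map_smul' c v := by
    ext i
    · simp; ring
    · simp

theorem diffLast_surjective (e r : ℕ) : Function.Surjective (diffLast e r) := by
  rintro ⟨u, z⟩
  obtain ⟨c, rfl⟩ := ZMod.intCast_surjective z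
  refine ⟨Fin.snoc (fun i => u i + c) c, ?_⟩
  simp [diffLast]

theorem diffLast_eq_zero_iff (e r : ℕ) (v : Fin (e + 1) → ℤ) :
    diffLast e r v = 0 ↔ ∃ k : ℤ, v = fun _ => r * k := by
  simp only [diffLast, LinearMap.coe_mk, AddHom.coe_mk, Prod.mk_eq_zero, funext_iff,
    Pi.zero_apply, sub_eq_zero, ZMod.intCast_zmod_eq_zero_iff_dvd]
  constructor
  · rintro ⟨h1, k, hk⟩
    refine ⟨k, fun i => ?_⟩
    refine Fin.lastCases hk (fun j => ?_) i
    rw [h1, hk]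
  · rintro ⟨k, hk⟩
    exact ⟨fun i => by rw [hk, hk], k, hk _⟩

/-- `ℤ[X] / (X^(e+1) - 1, r(1 + X + ⋯ + X^e)) ≅ ℤ^e × ℤ/r`. -/
theorem exists_surjective_X_pow_sub_one (e r : ℕ) :
    ∃ ψ : ℤ[X] →ₗ[ℤ] (Fin e → ℤ) × ZMod r, Function.Surjective ψ ∧
      ∀ f, ψ f = 0 ↔ f ∈ Ideal.span
        {X ^ (e + 1) - 1, (r : ℤ[X]) * ∑ i ∈ Finset.range (e + 1), (X : ℤ[X]) ^ i} := by
  set s := ∑ i ∈ Finset.range (e + 1), (X : ℤ[X]) ^ i with hs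
  have hg : (X ^ (e + 1) - 1 : ℤ[X]).Monic := monic_X_pow_sub_C 1 e.succ_ne_zero
  have hn : (X ^ (e + 1) - 1 : ℤ[X]).degree = (e + 1 : ℕ) := degree_X_pow_sub_C e.succ_pos 1
  have hsc : remCoeff (X ^ (e + 1) - 1) (e + 1) s = fun _ => 1 := by
    ext i
    have : s %ₘ (X ^ (e + 1) - 1) = s := by
      rw [modByMonic_eq_self_iff hg, hn, hs, degree_geom_sum_succ]
      exact_mod_cast e.lt_succ_self
    simp only [remCoeff, LinearMap.coe_mk, AddHom.coe_mk, this]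
    simp only [hs, finsetSum_coeff, coeff_X_pow]
    rw [Finset.sum_ite_eq, if_pos (Finset.mem_range.2 i.is_lt)]
  have hrk : ∀ k : ℤ, remCoeff (X ^ (e + 1) - 1) (e + 1) ((r * k : ℤ) • s) =
      fun _ => r * k := by
    intro k
    rw [map_smul, hsc]
    ext i
    simp
  refine ⟨(diffLast e r).comp (remCoeff (X ^ (e + 1) - 1) (e + 1)), fun v => ?_, fun f => ?_⟩
  · obtain ⟨w, rfl⟩ := diffLast_surjective e r v
    obtain ⟨f, rfl⟩ := exists_remCoeff_eq hg hn w
    exact ⟨f, rfl⟩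
  · rw [LinearMap.comp_apply, diffLast_eq_zero_iff, Ideal.mem_span_pair]
    simp only [← hrk, remCoeff_eq_iff hg hn, zsmul_eq_mul]
    constructor
    · rintro ⟨k, b, hb⟩
      refine ⟨b, (k : ℤ[X]), ?_⟩
      push_cast at hb
      linear_combination -hb
    · rintro ⟨a, b, rfl⟩
      obtain ⟨c, hc⟩ := X_sub_C_dvd_sub_C_eval (a := 1) (p := b)
      have hgeom : s * (X - 1) = X ^ (e + 1) - 1 := geom_sum_mul X (e + 1)
      refine ⟨b.eval 1, a + r * c, ?_⟩
      simp only [eq_intCast, Int.cast_one] at hc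
      push_cast
      linear_combination (r * s) * hc + r * c * hgeom

theorem stmt_9 (m p : ℕ) (hm : 1 ≤ m) (hp : 1 ≤ p) (d r : ℕ)
    (hd : d = Nat.gcd p m) (hr : r = p / d) :
    (Even m → Nonempty (coker (sMat p (cycMat m)) ≃+ ((Fin (d - 1) → ℤ) × ZMod r))) ∧
    (Odd m → Even p → Nonempty (coker (sMat p (cycMat m)) ≃+ (Fin d → ℤ))) ∧
    (Odd m → Odd p → Nonempty (coker (sMat p (cycMat m)) ≃+ (Fin (d - 1) → ZMod 2))) := by
  have hd0 : 0 < d := hd ▸ Nat.gcd_pos_of_pos_left m hp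
  have hpr : p = d * r := by
    rw [hr, Nat.mul_div_cancel' (hd ▸ Nat.gcd_dvd_left p m)]
  obtain ⟨φ, hφ, hker⟩ := exists_surjective_coker m p hm
  obtain ⟨e, rfl⟩ : ∃ e, d = e + 1 := ⟨d - 1, by omega⟩
  refine ⟨fun hme => ?_, fun hmo hpe => ?_, fun hmo hpo => ?_⟩
  · obtain ⟨ψ, hψ, hker'⟩ := exists_surjective_X_pow_sub_one e r
    refine nonempty_addEquiv_of_ker_iff φ ψ hφ hψ fun f => ?_
    rw [hker, hker', span_eq_span_of_quotient_iff]
    intro I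
    simpa [sub_eq_zero] using
      relations_iff_of_even (x := Ideal.Quotient.mk I X) hd hpr hme
  · have hg : (X ^ (e + 1) + 1 : ℤ[X]).Monic := monic_X_pow_add_C 1 e.succ_ne_zero
    have hn : (X ^ (e + 1) + 1 : ℤ[X]).degree = (e + 1 : ℕ) := degree_X_pow_add_C e.succ_pos 1
    refine nonempty_addEquiv_of_ker_iff φ (remCoeff (X ^ (e + 1) + 1) (e + 1)) hφ
      (exists_remCoeff_eq hg hn) fun f => ?_
    rw [hker, remCoeff_eq_zero_iff hg hn, ← Ideal.mem_span_singleton,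
      span_eq_span_of_quotient_iff]
    intro I
    simpa [sub_eq_zero, eq_neg_iff_add_eq_zero] using
      relations_iff_of_odd_of_even (x := Ideal.Quotient.mk I X) hd hpr hmo hpe
  · obtain ⟨ψ, hψ, hker'⟩ := exists_surjective_two_geom_sum e
    refine nonempty_addEquiv_of_ker_iff φ ψ hφ hψ fun f => ?_
    rw [hker, hker', span_eq_span_of_quotient_iff]
    intro I
    have h2 : Ideal.Quotient.mk I 2 = 2 := map_ofNat _ 2
    simpa [sub_eq_zero, h2] using
      relations_iff_of_odd_of_odd (x := Ideal.Quotient.mk I X) hd hpr hmo hpo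
end

section
/- Let n, k ≥ 1 be integers with n odd, and put d = gcd(n+1, k) and r = (n+1)/d. Then Coker ((1_k − X_k)·(1_k + X_k^{(n+1)/2})) ≅ ℤ ⊕ (ℤ/2ℤ)^{d−1} if r is even, and Coker ((1_k − X_k)·(1_k + X_k^{(n+1)/2})) ≅ ℤ^{(d+2)/2} if r is odd (in which case d is even). -/
open Matrix Polynomial

theorem nonempty_addEquiv_of_surjective {A B C : Type*} [AddCommGroup A] [AddCommGroup B]
    [AddCommGroup C] (f : A →+ B) (g : A →+ C) (hf : Function.Surjective f)
    (hg : Function.Surjective g) (h : ∀ a, f a = 0 ↔ g a = 0) : Nonempty (B ≃+ C) := by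
  have hker : f.ker = g.ker := by
    ext a
    simpa [AddMonoidHom.mem_ker] using h a
  exact ⟨(QuotientAddGroup.quotientKerEquivOfSurjective f hf).symm.trans
    ((QuotientAddGroup.quotientAddEquivOfEq hker).trans
      (QuotientAddGroup.quotientKerEquivOfSurjective g hg))⟩

theorem cycMat_mulVec_single {k : ℕ} (j : Fin k) :
    cycMat k *ᵥ Pi.single j 1 =
      Pi.single ⟨((j : ℕ) + 1) % k, Nat.mod_lt _ j.pos⟩ 1 := by
  ext i
  simp only [Matrix.mulVec_single_one, Matrix.col_apply, cycMat, Matrix.of_apply, Pi.single_apply,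
    Fin.ext_iff]
  exact if_congr eq_comm rfl rfl

theorem cycMat_pow_mulVec_single_zero {k : ℕ} (hk : 0 < k) (p : ℕ) :
    cycMat k ^ p *ᵥ Pi.single ⟨0, hk⟩ 1 = Pi.single ⟨p % k, Nat.mod_lt _ hk⟩ 1 := by
  induction p with
  | zero => simp [-Matrix.mulVec_single]
  | succ p ih =>
    rw [pow_succ', ← Matrix.mulVec_mulVec, ih, cycMat_mulVec_single]
    simp

/-- The orbit map `p ↦ p(X_k) e₀` from `ℤ[X]` to `ℤ^k`. -/
noncomputable def cycOrbit {k : ℕ} (hk : 0 < k) : ℤ[X] →+ (Fin k → ℤ) where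
  toFun p := aeval (cycMat k) p *ᵥ Pi.single ⟨0, hk⟩ 1
  map_zero' := by rw [map_zero, Matrix.zero_mulVec]
  map_add' p q := by rw [map_add, Matrix.add_mulVec]

theorem cycOrbit_mul {k : ℕ} (hk : 0 < k) (p q : ℤ[X]) :
    cycOrbit hk (p * q) = aeval (cycMat k) p *ᵥ cycOrbit hk q := by
  simp [cycOrbit, -Matrix.mulVec_single]

theorem cycOrbit_X_pow_sub_one {k : ℕ} (hk : 0 < k) : cycOrbit hk (X ^ k - 1) = 0 := by
  simp [cycOrbit, -Matrix.mulVec_single, Matrix.sub_mulVec, cycMat_pow_mulVec_single_zero hk]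

theorem cycOrbit_apply {k : ℕ} (hk : 0 < k) {q : ℤ[X]} (hq : q.natDegree < k) (i : Fin k) :
    cycOrbit hk q i = q.coeff i := by
  have h : cycOrbit hk q = ∑ j ∈ Finset.range k,
      q.coeff j • (Pi.single ⟨j % k, Nat.mod_lt _ hk⟩ 1 : Fin k → ℤ) := by
    simp only [cycOrbit, AddMonoidHom.coe_mk, ZeroHom.coe_mk]
    rw [aeval_eq_sum_range' hq, Matrix.sum_mulVec]
    simp only [Matrix.smul_mulVec, cycMat_pow_mulVec_single_zero hk]
  rw [h, Finset.sum_apply, Finset.sum_eq_single (i : ℕ)]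
  · simp [Nat.mod_eq_of_lt i.2]
  · intro j hj hji
    have hj' := Nat.mod_eq_of_lt (Finset.mem_range.mp hj)
    simp [Fin.ext_iff, hj', hji.symm]
  · simp

theorem monic_X_pow_sub_one {k : ℕ} (hk : 0 < k) : (X ^ k - 1 : ℤ[X]).Monic := by
  simpa using monic_X_pow_sub_C (1 : ℤ) hk.ne'

theorem natDegree_modByMonic_X_pow_sub_one_lt {k : ℕ} (hk : 0 < k) (p : ℤ[X]) :
    (p %ₘ (X ^ k - 1)).natDegree < k := by
  have hdeg : (X ^ k - 1 : ℤ[X]).natDegree = k := by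
    simpa using natDegree_X_pow_sub_C (n := k) (r := (1 : ℤ))
  have hne : (X ^ k - 1 : ℤ[X]) ≠ 1 := fun h => by
    rw [h, natDegree_one] at hdeg
    omega
  simpa only [hdeg] using natDegree_modByMonic_lt p (monic_X_pow_sub_one hk) hne

theorem cycOrbit_surjective {k : ℕ} (hk : 0 < k) : Function.Surjective (cycOrbit hk) := by
  intro v
  have hlt : ∀ j : Fin k, (C (v j) * X ^ (j : ℕ)).natDegree < k := fun j =>
    (natDegree_C_mul_X_pow_le _ _).trans_lt j.2
  refine ⟨∑ j : Fin k, C (v j) * X ^ (j : ℕ), ?_⟩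
  ext i
  simp only [map_sum, Finset.sum_apply, cycOrbit_apply hk (hlt _), coeff_C_mul_X_pow,
    ← Fin.ext_iff, Finset.sum_ite_eq, Finset.mem_univ, if_true]

theorem cycOrbit_eq_zero_iff {k : ℕ} (hk : 0 < k) (p : ℤ[X]) :
    cycOrbit hk p = 0 ↔ X ^ k - 1 ∣ p := by
  constructor
  · intro h
    rw [← modByMonic_eq_zero_iff_dvd (monic_X_pow_sub_one hk)]
    have hlt := natDegree_modByMonic_X_pow_sub_one_lt hk p
    have h0 : cycOrbit hk (p %ₘ (X ^ k - 1)) = 0 := by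
      rw [← modByMonic_add_div p (X ^ k - 1), map_add, mul_comm (X ^ k - 1), cycOrbit_mul,
        cycOrbit_X_pow_sub_one, Matrix.mulVec_zero, add_zero] at h
      exact h
    ext i
    by_cases hi : i < k
    · simpa [cycOrbit_apply hk hlt] using congrFun h0 ⟨i, hi⟩
    · rw [coeff_zero]
      exact coeff_eq_zero_of_natDegree_lt (by omega)
  · rintro ⟨q, rfl⟩
    rw [mul_comm, cycOrbit_mul, cycOrbit_X_pow_sub_one, Matrix.mulVec_zero]

/-- The cokernel of `f(X_k)` is a quotient of `ℤ[X]` by the ideal `(f, X^k - 1)`. -/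
theorem exists_surjective_coker_aeval_cycMat {k : ℕ} (hk : 0 < k) (f : ℤ[X]) :
    ∃ φ : ℤ[X] →+ coker (aeval (cycMat k) f), Function.Surjective φ ∧
      ∀ p, φ p = 0 ↔ p ∈ Ideal.span {f, X ^ k - 1} := by
  refine ⟨(Submodule.mkQ (LinearMap.range (aeval (cycMat k) f).mulVecLin)).toAddMonoidHom.comp
    (cycOrbit hk), (Submodule.mkQ_surjective _).comp (cycOrbit_surjective hk), fun p => ?_⟩
  have hmem : cycOrbit hk p ∈ LinearMap.range (aeval (cycMat k) f).mulVecLin ↔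
      p ∈ Ideal.span {f, X ^ k - 1} := by
    rw [Ideal.mem_span_pair, LinearMap.mem_range]
    constructor
    · rintro ⟨v, hv⟩
      obtain ⟨u, rfl⟩ := cycOrbit_surjective hk v
      rw [Matrix.mulVecLin_apply, ← cycOrbit_mul] at hv
      obtain ⟨w, hw⟩ := (cycOrbit_eq_zero_iff hk (p - f * u)).mp (by rw [map_sub, hv, sub_self])
      exact ⟨u, w, by linear_combination -hw⟩
    · rintro ⟨u, w, rfl⟩
      refine ⟨cycOrbit hk u, ?_⟩
      rw [Matrix.mulVecLin_apply, ← cycOrbit_mul, map_add,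
        (cycOrbit_eq_zero_iff hk _).mpr (Dvd.intro_left w rfl), add_zero, mul_comm]
  rw [← hmem]
  exact Submodule.Quotient.mk_eq_zero _

/-- In a commutative ring, the relations `(1 - x)(1 + x^m) = 0` and `x^k = 1` force
`x ^ gcd(2m, k) = 1`. -/
theorem pow_gcd_eq_one_of_relations {R : Type*} [CommRing R] {x : R} {m k : ℕ}
    (h : (1 - x) * (1 + x ^ m) = 0) (hk : x ^ k = 1) : x ^ Nat.gcd (2 * m) k = 1 := by
  refine pow_gcd_eq_one.mpr ⟨?_, hk⟩
  obtain ⟨c, hc⟩ := sub_dvd_pow_sub_pow 1 x m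
  rw [one_pow] at hc
  linear_combination (-c) * h - (1 + x ^ m) * hc

theorem span_le_iff_quotient {f g : ℤ[X]} {J : Ideal ℤ[X]} :
    Ideal.span {f, g} ≤ J ↔ Ideal.Quotient.mk J f = 0 ∧ Ideal.Quotient.mk J g = 0 := by
  simp [Ideal.span_le, Set.insert_subset_iff, Ideal.Quotient.eq_zero_iff_mem]

theorem span_eq_of_dvd {m k d : ℕ} (hd : d = Nat.gcd (2 * m) k) (hdm : d ∣ m) :
    Ideal.span {(1 - X) * (1 + X ^ m), X ^ k - 1} =
      Ideal.span {2 * (1 - X), (X ^ d - 1 : ℤ[X])} := by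
  obtain ⟨a, ha⟩ := hdm
  apply le_antisymm
  · obtain ⟨h₁, h₂⟩ := span_le_iff_quotient.mp (le_refl (Ideal.span {2 * (1 - X),
      (X ^ d - 1 : ℤ[X])}))
    obtain ⟨b, hb⟩ : d ∣ k := hd ▸ Nat.gcd_dvd_right _ _
    rw [span_le_iff_quotient]
    simp only [map_mul, map_sub, map_add, map_pow, map_one, map_ofNat] at h₁ h₂ ⊢
    rw [sub_eq_zero] at h₂
    rw [ha, hb, pow_mul, pow_mul, h₂]
    simp only [one_pow, sub_self, and_true]
    linear_combination h₁
  · obtain ⟨h₁, h₂⟩ := span_le_iff_quotient.mp (le_refl (Ideal.span {(1 - X) * (1 + X ^ m),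
      (X ^ k - 1 : ℤ[X])}))
    rw [span_le_iff_quotient]
    simp only [map_mul, map_sub, map_add, map_pow, map_one, map_ofNat] at h₁ h₂ ⊢
    have h := pow_gcd_eq_one_of_relations h₁ (sub_eq_zero.mp h₂)
    rw [← hd] at h
    refine ⟨?_, by rw [h, sub_self]⟩
    have hone : Ideal.Quotient.mk (Ideal.span {(1 - X) * (1 + X ^ m), (X ^ k - 1 : ℤ[X])}) X ^ m
        = 1 :=
      orderOf_dvd_iff_pow_eq_one.mp ((orderOf_dvd_of_pow_eq_one h).trans ⟨a, ha⟩)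
    rw [hone] at h₁
    linear_combination h₁

theorem span_eq_of_odd {m k e r : ℕ} (hd : 2 * e = Nat.gcd (2 * m) k) (hm : m = e * r)
    (hr : Odd r) :
    Ideal.span {(1 - X) * (1 + X ^ m), X ^ k - 1} =
      Ideal.span {((X - 1) * (X ^ e + 1) : ℤ[X])} := by
  obtain ⟨a, rfl⟩ := hr
  have key : ∀ {R : Type} [CommRing R] (x : R), x ^ (2 * e) = 1 → x ^ m = x ^ e := by
    intro R _ x hx
    rw [hm, show e * (2 * a + 1) = 2 * e * a + e by ring, pow_add, pow_mul, hx, one_pow, one_mul]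
  apply le_antisymm
  · obtain ⟨h₁, -⟩ := span_le_iff_quotient.mp (show Ideal.span {(X - 1) * (X ^ e + 1),
      (X - 1) * (X ^ e + 1)} ≤ Ideal.span {((X - 1) * (X ^ e + 1) : ℤ[X])} by simp)
    obtain ⟨b, hb⟩ : 2 * e ∣ k := hd ▸ Nat.gcd_dvd_right _ _
    rw [span_le_iff_quotient]
    simp only [map_mul, map_sub, map_add, map_pow, map_one] at h₁ ⊢
    have h : (Ideal.Quotient.mk (Ideal.span {((X - 1) * (X ^ e + 1) : ℤ[X])}) X) ^ (2 * e) = 1 := by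
      obtain ⟨c, hc⟩ := sub_dvd_pow_sub_pow
        (Ideal.Quotient.mk (Ideal.span {((X - 1) * (X ^ e + 1) : ℤ[X])}) X) 1 e
      rw [one_pow] at hc
      set y := Ideal.Quotient.mk (Ideal.span {((X - 1) * (X ^ e + 1) : ℤ[X])}) X
      linear_combination c * h₁ + (y ^ e + 1) * hc
    rw [key _ h, hb, pow_mul, h, one_pow, sub_self]
    exact ⟨by linear_combination -h₁, rfl⟩
  · obtain ⟨h₁, h₂⟩ := span_le_iff_quotient.mp (le_refl (Ideal.span {(1 - X) * (1 + X ^ m),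
      (X ^ k - 1 : ℤ[X])}))
    rw [Ideal.span_singleton_le_iff_mem, ← Ideal.Quotient.eq_zero_iff_mem]
    simp only [map_mul, map_sub, map_add, map_pow, map_one] at h₁ h₂ ⊢
    have h := pow_gcd_eq_one_of_relations h₁ (sub_eq_zero.mp h₂)
    rw [← hd] at h
    rw [key _ h] at h₁
    linear_combination -h₁

/-- `ℤ[X] / (2(1 - X), X^d - 1)` is `ℤ ⊕ (ℤ/2ℤ)^(d-1)`: evaluate at `1`, and reduce modulo `2` the
coefficients of positive degree of the remainder modulo `X^d - 1`. -/
theorem exists_surjective_int_prod_zmod_two {d : ℕ} (hd : 0 < d) :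
    ∃ φ : ℤ[X] →+ ℤ × (Fin (d - 1) → ZMod 2), Function.Surjective φ ∧
      ∀ p, φ p = 0 ↔ p ∈ Ideal.span {2 * (1 - X), (X ^ d - 1 : ℤ[X])} := by
  have hmonic := monic_X_pow_sub_one hd
  let φ : ℤ[X] →+ ℤ × (Fin (d - 1) → ZMod 2) :=
    { toFun p :=
        (p.eval 1, fun i : Fin (d - 1) => ((p %ₘ (X ^ d - 1)).coeff ((i : ℕ) + 1) : ZMod 2))
      map_zero' := by ext <;> simp
      map_add' p q := by ext <;> simp [add_modByMonic] }
  have hφ : ∀ p, φ p =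
      (p.eval 1, fun i : Fin (d - 1) => ((p %ₘ (X ^ d - 1)).coeff ((i : ℕ) + 1) : ZMod 2)) :=
    fun _ => rfl
  have hself : ∀ {p : ℤ[X]}, p.natDegree < d → p %ₘ (X ^ d - 1) = p := fun {p} hp => by
    rw [modByMonic_eq_self_iff hmonic]
    have : (X ^ d - 1 : ℤ[X]).degree = d := by
      simpa using degree_X_pow_sub_C hd (1 : ℤ)
    rw [this]
    exact degree_le_natDegree.trans_lt (by exact_mod_cast hp)
  refine ⟨φ, ?_, fun p => ?_⟩
  · rintro ⟨a, v⟩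
    choose w hw using fun i => ZMod.intCast_surjective (v i)
    have hlt : (C (a - ∑ i, w i) + ∑ i : Fin (d - 1), C (w i) * X ^ ((i : ℕ) + 1)).natDegree
        < d := by
      refine (natDegree_add_le_of_degree_le (n := d - 1)
        ((natDegree_C _).trans_le (Nat.zero_le _)) ?_).trans_lt (by omega)
      exact natDegree_sum_le_of_forall_le _ _ fun i _ =>
        (natDegree_C_mul_X_pow_le _ _).trans (by omega)
    refine ⟨_, (hφ (C (a - ∑ i, w i) + ∑ i : Fin (d - 1), C (w i) * X ^ ((i : ℕ) + 1))).trans ?_⟩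
    rw [hself hlt]
    ext i
    · simp [eval_finsetSum]
    · simp [-map_sub, -eq_intCast, coeff_C_succ, coeff_X_pow, ← Fin.ext_iff, hw]
  · rw [hφ, Prod.mk_eq_zero, Ideal.mem_span_pair]
    constructor
    · rintro ⟨h₁, h₂⟩
      have hdvd : C (2 : ℤ) * (X - C 1) ∣ p %ₘ (X ^ d - 1) := by
        have heval : (p %ₘ (X ^ d - 1)).eval 1 = 0 := by
          rw [← h₁]
          conv_rhs => rw [← modByMonic_add_div p (X ^ d - 1)]
          simp
        have hpos : ∀ j, (2 : ℤ) ∣ (p %ₘ (X ^ d - 1)).coeff (j + 1) := fun j => by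
          by_cases hj : j < d - 1
          · exact (ZMod.intCast_zmod_eq_zero_iff_dvd _ 2).mp (congrFun h₂ ⟨j, hj⟩)
          · rw [coeff_eq_zero_of_natDegree_lt]
            · exact dvd_zero _
            · have := natDegree_modByMonic_X_pow_sub_one_lt hd p
              omega
        have hall : ∀ j, (2 : ℤ) ∣ (p %ₘ (X ^ d - 1)).coeff j := by
          rintro (_ | j)
          · rw [eval_eq_sum_range, Finset.sum_range_succ'] at heval
            simp only [one_pow, mul_one] at heval
            exact (dvd_add_right (Finset.dvd_sum fun j _ => hpos j)).mp (heval ▸ dvd_zero 2)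
          · exact hpos j
        obtain ⟨q, hq⟩ := (C_dvd_iff_dvd_coeff _ _).mpr hall
        rw [hq] at heval ⊢
        refine mul_dvd_mul_left _ (dvd_iff_isRoot.mpr ?_)
        simpa using heval
      obtain ⟨u, hu⟩ := hdvd
      refine ⟨-u, p /ₘ (X ^ d - 1), ?_⟩
      have h := modByMonic_add_div p (X ^ d - 1)
      simp only [map_ofNat, map_one] at hu
      linear_combination h - hu
    · rintro ⟨u, w, rfl⟩
      refine ⟨by simp, ?_⟩
      ext i
      have h0 : (w * (X ^ d - 1)) %ₘ (X ^ d - 1) = 0 :=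
        (modByMonic_eq_zero_iff_dvd hmonic).mpr (Dvd.intro_left w rfl)
      have h2 : u * (2 * (1 - X)) = (2 : ℤ) • (u * (1 - X)) := by
        rw [zsmul_eq_mul]; push_cast; ring
      rw [add_modByMonic, h0, add_zero, h2, smul_modByMonic, coeff_smul, smul_eq_mul]
      push_cast
      rw [show (2 : ZMod 2) = 0 from rfl, zero_mul, Pi.zero_apply]

theorem stmt_10 (n k : ℕ) (hn : 1 ≤ n) (hk : 1 ≤ k) (hodd : Odd n) (d r : ℕ)
    (hd : d = Nat.gcd (n + 1) k) (hr : r = (n + 1) / d) :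
    (Even r → Nonempty (coker ((1 - cycMat k) * (1 + cycMat k ^ ((n + 1) / 2))) ≃+
      (ℤ × (Fin (d - 1) → ZMod 2)))) ∧
    (Odd r → Nonempty (coker ((1 - cycMat k) * (1 + cycMat k ^ ((n + 1) / 2))) ≃+
      (Fin ((d + 2) / 2) → ℤ))) := by
  obtain ⟨m, hm⟩ : ∃ m, n + 1 = 2 * m := by
    obtain ⟨a, rfl⟩ := hodd
    exact ⟨a + 1, by ring⟩
  have hdpos : 0 < d := hd ▸ Nat.gcd_pos_of_pos_left _ n.succ_pos
  have hrd : 2 * m = d * r := by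
    rw [hr, ← hm, Nat.mul_div_cancel' (hd ▸ Nat.gcd_dvd_left _ _)]
  rw [hm] at hd ⊢
  rw [Nat.mul_div_cancel_left m two_pos]
  have haeval : (1 - cycMat k) * (1 + cycMat k ^ m) =
      aeval (cycMat k) ((1 - X) * (1 + X ^ m) : ℤ[X]) := by simp
  rw [haeval]
  obtain ⟨φ, hφ, hφ0⟩ := exists_surjective_coker_aeval_cycMat hk ((1 - X) * (1 + X ^ m))
  constructor
  · rintro ⟨s, rfl⟩
    obtain ⟨ψ, hψ, hψ0⟩ := exists_surjective_int_prod_zmod_two hdpos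
    refine nonempty_addEquiv_of_surjective φ ψ hφ hψ fun p => ?_
    rw [hφ0, hψ0, span_eq_of_dvd hd ⟨s, by linarith⟩]
  · intro hrodd
    obtain ⟨e, rfl⟩ : 2 ∣ d :=
      (Nat.Coprime.dvd_of_dvd_mul_right (Nat.coprime_two_left.mpr hrodd) ⟨m, hrd.symm⟩)
    have hdeg : ((X - 1) * (X ^ e + 1) : ℤ[X]).natDegree = (2 * e + 2) / 2 := by
      rw [← C_1, Monic.natDegree_mul (monic_X_sub_C 1) (monic_X_pow_add_C 1 (by omega)),
        natDegree_X_sub_C, natDegree_X_pow_add_C]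
      omega
    have hmon : ((X - 1) * (X ^ e + 1) : ℤ[X]).Monic := by
      rw [← C_1]
      exact (monic_X_sub_C 1).mul (monic_X_pow_add_C 1 (by omega))
    obtain ⟨E⟩ := nonempty_addEquiv_of_surjective φ
      (AdjoinRoot.mk ((X - 1) * (X ^ e + 1) : ℤ[X])).toAddMonoidHom hφ AdjoinRoot.mk_surjective
      fun p => by
        rw [hφ0, span_eq_of_odd hd (by nlinarith) hrodd, Ideal.mem_span_singleton]
        exact AdjoinRoot.mk_eq_zero.symm
    exact ⟨E.trans ((AdjoinRoot.powerBasis' hmon).basis.reindex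
      (finCongr hdeg)).equivFun.toAddEquiv⟩
end
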